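/- arXiv:2410.13635 — 2 statements merged into one kernel-verified Lean document; each statement's English description precedes it below -/
import Mathlib

section
/- For every integer r ≥ 0 there exists a constant C > 0, depending only on r, with the following property: for every T > 0, all real numbers a, b with 0 ≤ a < b ≤ T, every real polynomial w of degree at most r, and every real polynomial q of degree at most r satisfying ∫_a^b (φ_T(t)·w(t) − q(t))·p(t) dt = 0 for every real polynomial p of degree at most r, one has ‖(φ_T·w)′ − q′‖_{L²(a,b)} ≤ C ‖w‖_{L²(a,b)}, where (φ_T·w)′ denotes the derivative of t ↦ φ_T(t)·w(t). -/
open Polynomial in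
/-- The `L²(0,1)` inner product on polynomials of degree at most `r`. -/
@[reducible]
noncomputable def unitIntervalInnerCore (r : ℕ) :
    InnerProductSpace.Core ℝ (degreeLE ℝ (r : WithBot ℕ)) where
  inner p q := ∫ t in (0 : ℝ)..1, p.1.eval t * q.1.eval t
  conj_inner_symm p q := by
    simp [mul_comm]
  re_inner_nonneg p := by
    simpa using intervalIntegral.integral_nonneg zero_le_one
      fun t _ => mul_self_nonneg (p.1.eval t)
  add_left p q s := by
    rw [← intervalIntegral.integral_add]
    · simp [add_mul]
    all_goals exact Continuous.intervalIntegrable (by fun_prop) _ _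
  smul_left p q c := by
    simp [mul_assoc]
  definite p hp := by
    have hzero : ∀ t ∈ Set.Icc (0 : ℝ) 1, p.1.eval t * p.1.eval t = 0 := by
      by_contra! h
      obtain ⟨t, ht, hne⟩ := h
      refine (intervalIntegral.integral_pos zero_lt_one (by fun_prop)
        (fun x _ => mul_self_nonneg (p.1.eval x))
        ⟨t, ht, lt_of_le_of_ne (mul_self_nonneg _) hne.symm⟩).ne' hp
    refine Subtype.ext (Polynomial.eq_zero_of_infinite_isRoot _ ?_)
    exact (Set.Icc_infinite zero_lt_one).mono fun t ht => mul_self_eq_zero.mp (hzero t ht)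

/-- Inverse (Markov type) inequality in `L²(0,1)` for polynomials of degree at most `r`. -/
theorem exists_integral_sq_derivative_le_unit (r : ℕ) :
    ∃ K : ℝ, 0 ≤ K ∧ ∀ p : Polynomial ℝ, p.natDegree ≤ r →
      (∫ t in (0 : ℝ)..1, (p.derivative.eval t) ^ 2) ≤
        K * ∫ t in (0 : ℝ)..1, (p.eval t) ^ 2 := by
  let V := Polynomial.degreeLE ℝ (r : WithBot ℕ)
  let core := unitIntervalInnerCore r
  let _ : NormedAddCommGroup V := core.toNormedAddCommGroup
  let _ : InnerProductSpace ℝ V := InnerProductSpace.ofCore core.toCore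
  have : FiniteDimensional ℝ V := by
    have : V = Polynomial.degreeLT ℝ (r + 1) := by
      rw [Polynomial.degreeLT_succ_eq_degreeLE]
    rw [this]
    infer_instance
  have hD : ∀ p ∈ V, Polynomial.derivative p ∈ V := fun p hp =>
    Polynomial.mem_degreeLE.mpr
      (Polynomial.degree_derivative_le.trans (Polynomial.mem_degreeLE.mp hp))
  let D : V →ₗ[ℝ] V := Polynomial.derivative.restrict hD
  let D' : V →L[ℝ] V := LinearMap.toContinuousLinearMap D
  have hnorm : ∀ p : V, ‖p‖ ^ 2 = ∫ t in (0 : ℝ)..1, (p.1.eval t) ^ 2 := by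
    intro p
    rw [← real_inner_self_eq_norm_sq]
    simp only [sq]
    rfl
  refine ⟨‖D'‖ ^ 2, sq_nonneg _, fun p hp => ?_⟩
  have hpV : p ∈ V := Polynomial.mem_degreeLE.mpr (Polynomial.natDegree_le_iff_degree_le.mp hp)
  have h := pow_le_pow_left₀ (norm_nonneg _) (D'.le_opNorm ⟨p, hpV⟩) 2
  rw [mul_pow, hnorm, hnorm] at h
  exact h

/-- Inverse (Markov type) inequality in `L²(a,b)` for polynomials of degree at most `r`, with the
natural scaling in the length of the interval. -/
theorem exists_integral_sq_derivative_le (r : ℕ) :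
    ∃ K : ℝ, 0 ≤ K ∧ ∀ a b : ℝ, a < b → ∀ p : Polynomial ℝ, p.natDegree ≤ r →
      (b - a) ^ 2 * (∫ t in a..b, (p.derivative.eval t) ^ 2) ≤
        K * ∫ t in a..b, (p.eval t) ^ 2 := by
  obtain ⟨K, hK, h⟩ := exists_integral_sq_derivative_le_unit r
  refine ⟨K, hK, fun a b hab p hp => ?_⟩
  have hscale : ∀ f : ℝ → ℝ,
      (b - a) * ∫ t in (0 : ℝ)..1, f (a + (b - a) * t) = ∫ t in a..b, f t := fun f => by
    rw [intervalIntegral.mul_integral_comp_add_mul]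
    simp
  have hdeg : (p.comp (.C a + .C (b - a) * .X)).natDegree ≤ r := by
    refine Polynomial.natDegree_comp_le.trans ?_
    have : (Polynomial.C a + Polynomial.C (b - a) * Polynomial.X).natDegree ≤ 1 := by
      compute_degree
    nlinarith
  have h1 := h _ hdeg
  simp only [Polynomial.derivative_comp, Polynomial.eval_mul, Polynomial.eval_comp,
    Polynomial.eval_add, Polynomial.eval_C, Polynomial.eval_X, Polynomial.derivative_add,
    Polynomial.derivative_C, Polynomial.derivative_C_mul, Polynomial.derivative_X, zero_add,
    mul_one, mul_pow, intervalIntegral.integral_const_mul] at h1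
  rw [← hscale fun t => (p.derivative.eval t) ^ 2, ← hscale fun t => (p.eval t) ^ 2]
  nlinarith [mul_le_mul_of_nonneg_left h1 (sub_pos.mpr hab).le]

/-- An `L²(a,b)`-orthogonal projection does not increase the `L²(a,b)` norm. -/
theorem integral_sq_le_of_integral_sub_mul_eq_zero {a b : ℝ} (hab : a ≤ b) {f g : ℝ → ℝ}
    (hf : Continuous f) (hg : Continuous g) (h : ∫ t in a..b, (f t - g t) * g t = 0) :
    ∫ t in a..b, g t ^ 2 ≤ ∫ t in a..b, f t ^ 2 := by
  have hint : ∀ u : ℝ → ℝ, Continuous u → IntervalIntegrable u MeasureTheory.volume a b :=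
    fun u hu => hu.intervalIntegrable a b
  have hle : ∫ t in a..b, (g t ^ 2 + 2 * ((f t - g t) * g t)) ≤ ∫ t in a..b, f t ^ 2 :=
    intervalIntegral.integral_mono_on hab (hint _ (by fun_prop)) (hint _ (by fun_prop))
      fun t _ => by nlinarith [sq_nonneg (f t - g t)]
  rwa [intervalIntegral.integral_add (hint _ (by fun_prop)) (hint _ (by fun_prop)),
    intervalIntegral.integral_const_mul, h, mul_zero, add_zero] at hle

theorem sub_div_self_le_one {T t : ℝ} (hT : 0 < T) (ht : 0 ≤ t) : (T - t) / T ≤ 1 :=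
  (div_le_one hT).mpr (by linarith)

/-- Lipschitz bound for the exponential weight, to the right of a nonnegative point. -/
theorem sq_exp_weight_sub_le {T a t : ℝ} (hT : 0 < T) (ha : 0 ≤ a) (hat : a ≤ t) :
    (T * Real.exp ((T - t) / T) - T * Real.exp ((T - a) / T)) ^ 2 ≤
      (Real.exp 1 * (t - a)) ^ 2 := by
  have hfac : Real.exp ((T - t) / T) = Real.exp ((T - a) / T) * Real.exp (-((t - a) / T)) := by
    rw [← Real.exp_add]
    congr 1
    ring
  have hx : 0 ≤ (t - a) / T := div_nonneg (sub_nonneg.mpr hat) hT.le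
  have h1 : Real.exp (-((t - a) / T)) ≤ 1 := Real.exp_le_one_iff.mpr (by linarith)
  have h2 := Real.add_one_le_exp (-((t - a) / T))
  have hT2 : T * (1 - Real.exp (-((t - a) / T))) ≤ t - a := by
    calc T * (1 - Real.exp (-((t - a) / T))) ≤ T * ((t - a) / T) := by gcongr; linarith
      _ = t - a := by field_simp
  have h0 : 0 ≤ T * (1 - Real.exp (-((t - a) / T))) := mul_nonneg hT.le (by linarith)
  calc (T * Real.exp ((T - t) / T) - T * Real.exp ((T - a) / T)) ^ 2
      = (Real.exp ((T - a) / T) * (T * (1 - Real.exp (-((t - a) / T))))) ^ 2 := by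
        rw [hfac]; ring
    _ ≤ (Real.exp 1 * (t - a)) ^ 2 := by
        gcongr
        exact sub_div_self_le_one hT ha

theorem hasDerivAt_exp_weight_mul_eval {T : ℝ} (hT : T ≠ 0) (w : Polynomial ℝ) (t : ℝ) :
    HasDerivAt (fun s : ℝ => T * Real.exp ((T - s) / T) * w.eval s)
      (-Real.exp ((T - t) / T) * w.eval t + T * Real.exp ((T - t) / T) * w.derivative.eval t)
      t := by
  have h := (((((hasDerivAt_id t).const_sub T).div_const T).exp).const_mul T).mul (w.hasDerivAt t)
  refine HasDerivAt.congr_deriv h ?_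
  simp only [id]
  field_simp

/-- Derivative estimate for the `L²(a,b)`-orthogonal projection error of `φ_T · w`,
where `φ_T(t) = T exp((T-t)/T)` and `w` is a polynomial of degree at most `r`. -/
theorem proj_exp_weight_deriv_estimate (r : ℕ) :
    ∃ C : ℝ, 0 < C ∧ ∀ T a b : ℝ, 0 < T → 0 ≤ a → a < b → b ≤ T →
      ∀ w q : Polynomial ℝ, w.natDegree ≤ r → q.natDegree ≤ r →
        (∀ p : Polynomial ℝ, p.natDegree ≤ r →
          (∫ t in a..b,
            (T * Real.exp ((T - t) / T) * w.eval t - q.eval t) * p.eval t) = 0) →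
        Real.sqrt (∫ t in a..b,
            (deriv (fun s : ℝ => T * Real.exp ((T - s) / T) * w.eval s) t -
              q.derivative.eval t) ^ 2) ≤
          C * Real.sqrt (∫ t in a..b, (w.eval t) ^ 2) := by
  obtain ⟨K, hK, hinv⟩ := exists_integral_sq_derivative_le r
  refine ⟨Real.sqrt (3 * Real.exp 1 ^ 2 * (1 + 2 * K)), by positivity, ?_⟩
  intro T a b hT ha hab _ w q hw hq horth
  have hint : ∀ u : ℝ → ℝ, Continuous u → IntervalIntegrable u MeasureTheory.volume a b :=
    fun u hu => hu.intervalIntegrable a b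
  rw [← Real.sqrt_mul (by positivity)]
  refine Real.sqrt_le_sqrt ?_
  simp only [fun t => (hasDerivAt_exp_weight_mul_eval hT.ne' w t).deriv]
  set M := T * Real.exp ((T - a) / T)
  -- Subtracting `M • w`, which the projection reproduces, leaves a factor of size `b - a`.
  set s : Polynomial ℝ := q - Polynomial.C M * w with hs
  have hsdeg : s.natDegree ≤ r :=
    (Polynomial.natDegree_sub_le _ _).trans
      (max_le hq ((Polynomial.natDegree_C_mul_le _ _).trans hw))
  have hweight : ∀ t ∈ Set.Icc a b,
      (T * Real.exp ((T - t) / T) - M) ^ 2 ≤ (Real.exp 1 * (b - a)) ^ 2 := fun t ht =>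
    (sq_exp_weight_sub_le hT ha ht.1).trans <| by
      have := sub_nonneg.mpr ht.1
      gcongr
      exact ht.2
  have hsw : ∫ t in a..b, s.eval t ^ 2 ≤
      (Real.exp 1 * (b - a)) ^ 2 * ∫ t in a..b, w.eval t ^ 2 := by
    have hproj := integral_sq_le_of_integral_sub_mul_eq_zero hab.le
      (f := fun t => (T * Real.exp ((T - t) / T) - M) * w.eval t) (g := fun t => s.eval t)
      (by fun_prop) (by fun_prop) (by
        rw [← horth s hsdeg]
        refine intervalIntegral.integral_congr fun t _ => ?_
        simp only [hs, Polynomial.eval_sub, Polynomial.eval_mul, Polynomial.eval_C]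
        ring)
    refine hproj.trans ?_
    rw [← intervalIntegral.integral_const_mul]
    refine intervalIntegral.integral_mono_on hab.le (hint _ (by fun_prop))
      (hint _ (by fun_prop)) fun t ht => ?_
    rw [mul_pow]
    exact mul_le_mul_of_nonneg_right (hweight t ht) (sq_nonneg _)
  have hsder : ∫ t in a..b, s.derivative.eval t ^ 2 ≤
      K * Real.exp 1 ^ 2 * ∫ t in a..b, w.eval t ^ 2 := by
    have h := (hinv a b hab s hsdeg).trans (mul_le_mul_of_nonneg_left hsw hK)
    refine le_of_mul_le_mul_left (h.trans_eq (by ring)) (pow_pos (sub_pos.mpr hab) 2)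
  have hwder := mul_le_mul_of_nonneg_left (hinv a b hab w hw) (sq_nonneg (Real.exp 1))
  have hmain : ∫ t in a..b, (-Real.exp ((T - t) / T) * w.eval t +
        T * Real.exp ((T - t) / T) * w.derivative.eval t - q.derivative.eval t) ^ 2 ≤
      ∫ t in a..b, (3 * Real.exp 1 ^ 2 * w.eval t ^ 2 +
        3 * (Real.exp 1 * (b - a)) ^ 2 * w.derivative.eval t ^ 2 +
        3 * s.derivative.eval t ^ 2) := by
    refine intervalIntegral.integral_mono_on hab.le (hint _ (by fun_prop))
      (hint _ (by fun_prop)) fun t ht => ?_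
    have hsplit : -Real.exp ((T - t) / T) * w.eval t +
        T * Real.exp ((T - t) / T) * w.derivative.eval t - q.derivative.eval t =
        -(Real.exp ((T - t) / T) * w.eval t) +
        (T * Real.exp ((T - t) / T) - M) * w.derivative.eval t - s.derivative.eval t := by
      simp only [hs, Polynomial.derivative_sub, Polynomial.derivative_C_mul,
        Polynomial.eval_sub, Polynomial.eval_mul, Polynomial.eval_C]
      ring
    have h1 : (Real.exp ((T - t) / T) * w.eval t) ^ 2 ≤ Real.exp 1 ^ 2 * w.eval t ^ 2 := by
      rw [mul_pow]
      gcongr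
      exact sub_div_self_le_one hT (ha.trans ht.1)
    have h2 := mul_le_mul_of_nonneg_right (hweight t ht) (sq_nonneg (w.derivative.eval t))
    rw [← mul_pow] at h2
    rw [hsplit]
    have hthree : ∀ x y z : ℝ, (-x + y - z) ^ 2 ≤ 3 * x ^ 2 + 3 * y ^ 2 + 3 * z ^ 2 :=
      fun x y z => by nlinarith [sq_nonneg (x + y), sq_nonneg (y + z), sq_nonneg (x - z)]
    refine (hthree _ _ _).trans ?_
    linarith
  rw [intervalIntegral.integral_add (hint _ (by fun_prop)) (hint _ (by fun_prop)),
    intervalIntegral.integral_add (hint _ (by fun_prop)) (hint _ (by fun_prop)),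
    intervalIntegral.integral_const_mul, intervalIntegral.integral_const_mul,
    intervalIntegral.integral_const_mul] at hmain
  refine hmain.trans ?_
  linarith
end

section
/- For every integer r ≥ 0 there exists a constant C > 0, depending only on r, with the following property: for every T > 0, all real numbers a, b with 0 ≤ a < b ≤ T, every real polynomial w of degree at most r, and every real polynomial q of degree at most r satisfying ∫_a^b (φ_T(t)·w(t) − q(t))·p(t) dt = 0 for every real polynomial p of degree at most r, one has (φ_T(a)·w(a) − q(a))² + (φ_T(b)·w(b) − q(b))² ≤ C (b−a) ‖w‖²_{L²(a,b)}. -/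
/-- On polynomials of degree at most `r`, evaluation at a point is bounded in the `L²(0,1)` norm. -/
theorem Polynomial.exists_sq_eval_le_integral_zero_one (r : ℕ) (x : ℝ) :
    ∃ K : ℝ, 0 < K ∧ ∀ p : Polynomial ℝ, p.natDegree ≤ r →
      p.eval x ^ 2 ≤ K * ∫ t in (0 : ℝ)..1, p.eval t ^ 2 := by
  have hInt (p q : Polynomial ℝ) :
      IntervalIntegrable (fun t => p.eval t * q.eval t) MeasureTheory.volume 0 1 :=
    (p.continuous.mul q.continuous).intervalIntegrable _ _
  let V := Polynomial.degreeLT ℝ (r + 1)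
  have : FiniteDimensional ℝ V := .of_injective
    (Polynomial.degreeLTEquiv ℝ (r + 1)).toLinearMap (LinearEquiv.injective _)
  let B : V →ₗ[ℝ] V →ₗ[ℝ] ℝ := LinearMap.mk₂ ℝ
    (fun p q => ∫ t in (0 : ℝ)..1, (p : Polynomial ℝ).eval t * (q : Polynomial ℝ).eval t)
    (fun p₁ p₂ q => by
      rw [← intervalIntegral.integral_add (hInt _ _) (hInt _ _)]
      simp [add_mul])
    (fun c p q => by simp [mul_assoc])
    (fun p q₁ q₂ => by
      rw [← intervalIntegral.integral_add (hInt _ _) (hInt _ _)]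
      simp [mul_add])
    (fun c p q => by simp [mul_left_comm])
  have hB : Function.Injective B := by
    rw [← LinearMap.ker_eq_bot, LinearMap.ker_eq_bot']
    intro p hp
    have h0 : ∫ t in (0 : ℝ)..1, (p : Polynomial ℝ).eval t * (p : Polynomial ℝ).eval t = 0 :=
      DFunLike.congr_fun hp p
    by_contra hne
    have hp0 : (p : Polynomial ℝ) ≠ 0 := by simpa using hne
    have hroots : Set.Icc (0 : ℝ) 1 ⊆ {t | (p : Polynomial ℝ).IsRoot t} := by
      intro t ht
      by_contra htne
      refine (intervalIntegral.integral_pos one_pos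
        ((p : Polynomial ℝ).continuous.mul (p : Polynomial ℝ).continuous).continuousOn
        (fun s _ => mul_self_nonneg _) ⟨t, ht, ?_⟩).ne' h0
      exact mul_self_pos.mpr htne
    exact (Set.Icc_infinite one_pos)
      ((Polynomial.finite_setOfPred_isRoot hp0).subset hroots)
  have hsurj : Function.Surjective B :=
    (LinearMap.injective_iff_surjective_of_finrank_eq_finrank
      (Subspace.dual_finrank_eq (K := ℝ) (V := V)).symm).mp hB
  obtain ⟨g, hg⟩ := hsurj ((Polynomial.leval x).comp V.subtype)
  set G := ∫ t in (0 : ℝ)..1, (g : Polynomial ℝ).eval t * (g : Polynomial ℝ).eval t with hG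
  have hG0 : 0 ≤ G := intervalIntegral.integral_nonneg zero_le_one fun t _ => mul_self_nonneg _
  refine ⟨G + 1, by positivity, fun p hp => ?_⟩
  have hpV : p ∈ V := by
    rw [Polynomial.mem_degreeLT]
    exact (Polynomial.natDegree_le_iff_degree_le.mp hp).trans_lt (by exact_mod_cast r.lt_succ_self)
  have hs : ∫ t in (0 : ℝ)..1, (g : Polynomial ℝ).eval t * p.eval t = p.eval x :=
    DFunLike.congr_fun hg ⟨p, hpV⟩
  set s := p.eval x
  have hexp : 0 ≤ (G + 1) ^ 2 * (∫ t in (0 : ℝ)..1, p.eval t * p.eval t)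
      - 2 * (G + 1) * s * s + s ^ 2 * G := by
    conv_rhs => rw [hG]; arg 1; arg 2; arg 2; rw [← hs]
    simp only [← intervalIntegral.integral_const_mul]
    rw [← intervalIntegral.integral_sub ((hInt _ _).const_mul _) ((hInt _ _).const_mul _),
      ← intervalIntegral.integral_add
        (((hInt _ _).const_mul _).sub ((hInt _ _).const_mul _)) ((hInt _ _).const_mul _)]
    refine intervalIntegral.integral_nonneg zero_le_one fun t _ => ?_
    nlinarith [sq_nonneg ((G + 1) * p.eval t - s * (g : Polynomial ℝ).eval t)]
  simp only [pow_two (p.eval _)]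
  nlinarith [sq_nonneg s]

/-- Inverse trace inequality at the endpoints of an interval. -/
theorem Polynomial.exists_sq_eval_endpoints_le_integral (r : ℕ) :
    ∃ K : ℝ, 0 < K ∧ ∀ a b : ℝ, a < b → ∀ p : Polynomial ℝ, p.natDegree ≤ r →
      (b - a) * p.eval a ^ 2 ≤ K * ∫ t in a..b, p.eval t ^ 2 ∧
      (b - a) * p.eval b ^ 2 ≤ K * ∫ t in a..b, p.eval t ^ 2 := by
  obtain ⟨K₀, hK₀, h₀⟩ := Polynomial.exists_sq_eval_le_integral_zero_one r 0
  obtain ⟨K₁, hK₁, h₁⟩ := Polynomial.exists_sq_eval_le_integral_zero_one r 1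
  refine ⟨K₀ + K₁, by positivity, fun a b hab p hp => ?_⟩
  have hk : 0 < b - a := sub_pos.mpr hab
  set P := p.comp (Polynomial.C (b - a) * Polynomial.X + Polynomial.C a) with hP
  have hPdeg : P.natDegree ≤ r := by
    rw [hP, Polynomial.natDegree_comp, Polynomial.natDegree_linear hk.ne', mul_one]
    exact hp
  have hPe (t : ℝ) : P.eval t = p.eval ((b - a) * t + a) := by simp [hP]
  have hInt : (b - a) * ∫ t in (0 : ℝ)..1, P.eval t ^ 2 = ∫ t in a..b, p.eval t ^ 2 := by
    simp_rw [hPe]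
    rw [intervalIntegral.mul_integral_comp_mul_add (f := fun u => p.eval u ^ 2)]
    simp
  have hI : 0 ≤ ∫ t in (0 : ℝ)..1, P.eval t ^ 2 :=
    intervalIntegral.integral_nonneg zero_le_one fun t _ => sq_nonneg _
  have ea : P.eval 0 = p.eval a := by simp [hPe]
  have eb : P.eval 1 = p.eval b := by simp [hPe]
  have hPa := h₀ P hPdeg
  have hPb := h₁ P hPdeg
  rw [← hInt, mul_left_comm, ← ea, ← eb]
  constructor <;> refine mul_le_mul_of_nonneg_left ?_ hk.le <;> nlinarith

/-- The weight `φ_T(t) = T exp((T-t)/T)` is `e`-Lipschitz on the nonnegative half-line. -/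
theorem sq_expWeight_sub_le {T a t : ℝ} (hT : 0 < T) (ha : 0 ≤ a) (hat : a ≤ t) :
    (T * Real.exp ((T - t) / T) - T * Real.exp ((T - a) / T)) ^ 2 ≤
      Real.exp 1 ^ 2 * (t - a) ^ 2 := by
  rw [← mul_pow]
  have hsplit : Real.exp ((T - t) / T) = Real.exp ((T - a) / T) * Real.exp (-((t - a) / T)) := by
    rw [← Real.exp_add]
    congr 1
    ring
  have hx : 0 ≤ (t - a) / T := div_nonneg (sub_nonneg.mpr hat) hT.le
  have hle : Real.exp ((T - a) / T) ≤ Real.exp 1 :=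
    Real.exp_le_exp.mpr ((div_le_one hT).mpr (by linarith))
  have hlow : 1 - Real.exp (-((t - a) / T)) ≤ (t - a) / T := by
    linarith [Real.one_sub_le_exp_neg ((t - a) / T)]
  have hup : 0 ≤ 1 - Real.exp (-((t - a) / T)) := by
    linarith [Real.exp_le_one_iff.mpr (neg_nonpos.mpr hx)]
  have hmain : Real.exp ((T - a) / T) * (1 - Real.exp (-((t - a) / T))) ≤
      Real.exp 1 * ((t - a) / T) := mul_le_mul hle hlow hup (Real.exp_pos _).le
  rw [← neg_sq, hsplit]
  refine pow_le_pow_left₀ ?_ ?_ 2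
  · nlinarith [mul_nonneg hT.le (mul_nonneg (Real.exp_pos ((T - a) / T)).le hup)]
  · calc _ = T * (Real.exp ((T - a) / T) * (1 - Real.exp (-((t - a) / T)))) := by ring
      _ ≤ T * (Real.exp 1 * ((t - a) / T)) := mul_le_mul_of_nonneg_left hmain hT.le
      _ = Real.exp 1 * (t - a) := by field_simp

/-- Endpoint estimate for the `L²(a,b)`-orthogonal projection error of `φ_T · w`,
where `φ_T(t) = T exp((T-t)/T)` and `w` is a polynomial of degree at most `r`. -/
theorem proj_exp_weight_trace_estimate (r : ℕ) :
    ∃ C : ℝ, 0 < C ∧ ∀ T a b : ℝ, 0 < T → 0 ≤ a → a < b → b ≤ T →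
      ∀ w q : Polynomial ℝ, w.natDegree ≤ r → q.natDegree ≤ r →
        (∀ p : Polynomial ℝ, p.natDegree ≤ r →
          (∫ t in a..b,
            (T * Real.exp ((T - t) / T) * w.eval t - q.eval t) * p.eval t) = 0) →
        (T * Real.exp ((T - a) / T) * w.eval a - q.eval a) ^ 2 +
            (T * Real.exp ((T - b) / T) * w.eval b - q.eval b) ^ 2 ≤
          C * (b - a) * ∫ t in a..b, (w.eval t) ^ 2 := by
  obtain ⟨K, hK, hinv⟩ := Polynomial.exists_sq_eval_endpoints_le_integral r
  refine ⟨5 * Real.exp 1 ^ 2 * K, by positivity, ?_⟩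
  intro T a b hT ha hab _ w q hw hq horth
  have hk : 0 < b - a := sub_pos.mpr hab
  have hlip (t : ℝ) (ht : a ≤ t) := sq_expWeight_sub_le hT ha ht
  set φ : ℝ → ℝ := fun t => T * Real.exp ((T - t) / T) with hφ
  have hφc : Continuous φ := by fun_prop
  change (φ a * w.eval a - q.eval a) ^ 2 + (φ b * w.eval b - q.eval b) ^ 2 ≤ _
  change ∀ t, a ≤ t → (φ t - φ a) ^ 2 ≤ Real.exp 1 ^ 2 * (t - a) ^ 2 at hlip
  set v := Polynomial.C (φ a) * w - q with hv
  have hvdeg : v.natDegree ≤ r :=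
    (Polynomial.natDegree_sub_le _ _).trans
      (max_le ((Polynomial.natDegree_C_mul_le _ _).trans hw) hq)
  have hve (t : ℝ) : v.eval t = φ a * w.eval t - q.eval t := by simp [hv]
  have horthv : ∫ t in a..b, (φ t * w.eval t - q.eval t) * v.eval t = 0 := horth v hvdeg
  have hwc := w.continuous
  have hqc := q.continuous
  have hvc := v.continuous
  have hvw : ∫ t in a..b, v.eval t ^ 2 ≤
      Real.exp 1 ^ 2 * (b - a) ^ 2 * ∫ t in a..b, w.eval t ^ 2 := by
    have hle : ∫ t in a..b, v.eval t ^ 2 ≤ ∫ t in a..b,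
        (2 * ((φ t * w.eval t - q.eval t) * v.eval t) +
          Real.exp 1 ^ 2 * (b - a) ^ 2 * w.eval t ^ 2) := by
      refine intervalIntegral.integral_mono_on hab.le
        (Continuous.intervalIntegrable (by fun_prop) _ _)
        (Continuous.intervalIntegrable (by fun_prop) _ _) fun t ht => ?_
      have hψ : (φ t - φ a) ^ 2 ≤ Real.exp 1 ^ 2 * (b - a) ^ 2 :=
        (hlip t ht.1).trans (mul_le_mul_of_nonneg_left
          (pow_le_pow_left₀ (sub_nonneg.mpr ht.1) (by linarith [ht.2]) 2) (by positivity))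
      have hq' : φ t * w.eval t - q.eval t = (φ t - φ a) * w.eval t + v.eval t := by
        rw [hve]; ring
      rw [hq']
      nlinarith [mul_le_mul_of_nonneg_right hψ (sq_nonneg (w.eval t)),
        sq_nonneg ((φ t - φ a) * w.eval t + v.eval t)]
    rwa [intervalIntegral.integral_add (Continuous.intervalIntegrable (by fun_prop) _ _)
      (Continuous.intervalIntegrable (by fun_prop) _ _), intervalIntegral.integral_const_mul,
      intervalIntegral.integral_const_mul, horthv, mul_zero, zero_add] at hle
  obtain ⟨hva, hvb⟩ := hinv a b hab v hvdeg
  obtain ⟨_, hwb⟩ := hinv a b hab w hw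
  set W := ∫ t in a..b, w.eval t ^ 2
  set E := Real.exp 1 ^ 2
  have hE : 0 ≤ E := by positivity
  have hKv := mul_le_mul_of_nonneg_left hvw hK.le
  have hsb : (φ b * w.eval b - q.eval b) ^ 2 ≤
      2 * (E * (b - a) ^ 2 * w.eval b ^ 2) + 2 * v.eval b ^ 2 := by
    have hq' : φ b * w.eval b - q.eval b = (φ b - φ a) * w.eval b + v.eval b := by
      rw [hve]; ring
    rw [hq']
    nlinarith [mul_le_mul_of_nonneg_right (hlip b hab.le) (sq_nonneg (w.eval b)),
      sq_nonneg ((φ b - φ a) * w.eval b - v.eval b)]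
  rw [← hve a]
  refine le_of_mul_le_mul_left ?_ hk
  have hwb' := mul_le_mul_of_nonneg_left hwb (mul_nonneg hE (sq_nonneg (b - a)))
  have hsb' := mul_le_mul_of_nonneg_left hsb hk.le
  linarith
end
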